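/- Let B(q) be the 8×8 matrix over ℚ(q) with diagonal entries [2]_q, entries −1 in the symmetric positions corresponding to the edges {1,3}, {3,4}, {4,5}, {5,6}, {6,7}, {7,8}, {2,4} of the E_8 Dynkin diagram (Bourbaki labelling), and 0 otherwise (the symmetrized q-Cartan matrix of type E_8). Then B(q) is invertible and every entry of the matrix [30]_q · B(q)^{−1} lies in ℕ[q,q^{−1}]. -/

import Mathlib

/-!
Let `A` be the adjacency matrix of the `E_8` diagram, so that `B = (q + q⁻¹) - A`, and let
`U_n` be the integer matrices with `U_0 = 0`, `U_1 = 1`, `U_{n+2} = A U_{n+1} - U_n`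
(Chebyshev polynomials of the second kind evaluated at `A`). The recursion makes the product
`B * ∑_{k<n} q^k U_{k+1}` telescope to `q⁻¹ + q^n U_n - q^{n-1} U_{n+1}` (`qCartan_mul_sum`).
Since the Coxeter number of `E_8` is `30` and `-1` lies in the Weyl group, `U_30 = 0` and
`U_29 = 1`; hence `C = ∑_{k<29} q^{k-14} U_{k+1}` satisfies `B * C = q^15 + q^{-15}`.
As `[30] = [15] (q^15 + q^{-15})`, this gives `[30] B⁻¹ = [15] C`, and the claim follows because
`U_1, …, U_29` have nonnegative entries, which is a finite integer computation
(`chebE8_nonneg`).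
-/

set_option synthInstance.maxHeartbeats 1000000

/-- The variable `q`, as an element of the field `ℚ(q)` of rational functions. -/
noncomputable def qq : RatFunc ℚ := RatFunc.X

/-- The quantum number `[m]_q = (q^m − q^{−m})/(q − q^{−1}) = Σ_{i=0}^{m−1} q^{m−1−2i}`. -/
noncomputable def qNum (m : ℕ) : RatFunc ℚ :=
  ∑ i ∈ Finset.range m, qq ^ ((m : ℤ) - 1 - 2 * (i : ℤ))

/-- An element of `ℚ(q)` lies in `ℕ[q,q^{−1}]` if it is a Laurent polynomial in `q`
with nonnegative integer coefficients. -/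
def IsNatLaurent (f : RatFunc ℚ) : Prop :=
  ∃ c : ℤ →₀ ℕ, f = c.sum fun k n => (n : RatFunc ℚ) * qq ^ k

/-- The adjacency matrix of the `E_8` Dynkin diagram (Bourbaki labelling, shifted to start
at `0`). -/
def adjE8 : Matrix (Fin 8) (Fin 8) ℤ :=
  !![0, 0, 1, 0, 0, 0, 0, 0;
     0, 0, 0, 1, 0, 0, 0, 0;
     1, 0, 0, 1, 0, 0, 0, 0;
     0, 1, 1, 0, 1, 0, 0, 0;
     0, 0, 0, 1, 0, 1, 0, 0;
     0, 0, 0, 0, 1, 0, 1, 0;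
     0, 0, 0, 0, 0, 1, 0, 1;
     0, 0, 0, 0, 0, 0, 1, 0]

/-- The matrix `U_n(A)`, where `A` is the adjacency matrix of `E_8` and `U_n` is the Chebyshev
polynomial of the second kind with `U_0 = 0`, `U_1 = 1` and `U_{n+2}(x) = x U_{n+1}(x) - U_n(x)`. -/
def chebE8 : ℕ → Matrix (Fin 8) (Fin 8) ℤ
  | 0 => 0
  | 1 => 1
  | n + 2 => adjE8 * chebE8 (n + 1) - chebE8 n

theorem chebE8_nonneg : ∀ (n : Fin 30) (i j : Fin 8), 0 ≤ chebE8 n i j := by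
  -- `Matrix.of.symm` exposes the entries as integers to the search for a `Decidable` instance.
  have h : ∀ (n : Fin 30) (i j : Fin 8), 0 ≤ Matrix.of.symm (chebE8 n) i j := by
    decide +kernel
  exact h

theorem chebE8_twentynine : chebE8 29 = 1 := by
  decide +kernel

theorem chebE8_thirty : chebE8 30 = 0 := by
  decide +kernel

/-- The product telescopes: it is multiplication of the recursion for `chebE8` by `q^k`, summed
over `k < n`. -/
theorem qCartan_mul_sum {K : Type*} [Field K] (q : K) (hq : q ≠ 0) (n : ℕ) :
    ((q + q⁻¹) • (1 : Matrix (Fin 8) (Fin 8) K) - adjE8.map (Int.cast : ℤ → K)) *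
        ∑ k ∈ Finset.range n, q ^ k • (chebE8 (k + 1)).map (Int.cast : ℤ → K) =
      q⁻¹ • 1 + q ^ n • (chebE8 n).map (Int.cast : ℤ → K) -
        (q ^ n * q⁻¹) • (chebE8 (n + 1)).map (Int.cast : ℤ → K) := by
  induction n with
  | zero => simp [chebE8]
  | succ n ih =>
    have hrec : (chebE8 (n + 2)).map (Int.cast : ℤ → K) =
        adjE8.map (Int.cast : ℤ → K) * (chebE8 (n + 1)).map (Int.cast : ℤ → K) -
          (chebE8 n).map (Int.cast : ℤ → K) := by
      have h := congrArg (Int.castRingHom K).mapMatrix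
        (show chebE8 (n + 2) = adjE8 * chebE8 (n + 1) - chebE8 n from rfl)
      rw [map_sub, map_mul] at h
      exact h
    have hpow : q ^ (n + 1) * q⁻¹ = q ^ n := by
      rw [pow_succ, mul_assoc, mul_inv_cancel₀ hq, mul_one]
    have hpow' : q ^ n * (q + q⁻¹) = q ^ (n + 1) + q ^ n * q⁻¹ := by ring
    rw [Finset.sum_range_succ, mul_add, ih, hrec, hpow, Matrix.mul_smul, sub_mul, smul_mul_assoc,
      one_mul, smul_sub, smul_smul, hpow', add_smul, smul_sub]
    abel

theorem qq_ne_zero : qq ≠ 0 := RatFunc.X_ne_zero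

theorem qq_pow_add_ne_zero : qq ^ (15 : ℤ) + qq ^ (-15 : ℤ) ≠ 0 := by
  intro h
  have h1 : qq ^ 30 + 1 = 0 := by
    have h2 : qq ^ (15 : ℤ) * (qq ^ (15 : ℤ) + qq ^ (-15 : ℤ)) = qq ^ 30 + 1 := by
      rw [mul_add, ← zpow_add₀ qq_ne_zero, ← zpow_add₀ qq_ne_zero]
      norm_num
    rw [← h2, h, mul_zero]
  have h3 : algebraMap (Polynomial ℚ) (RatFunc ℚ) (Polynomial.X ^ 30 + Polynomial.C 1) = 0 := by
    simpa [qq] using h1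
  exact Polynomial.X_pow_add_C_ne_zero (n := 30) (by norm_num) (1 : ℚ)
    (RatFunc.algebraMap_injective ℚ (by rw [h3, map_zero]))

theorem qNum_thirty : qNum 30 = qNum 15 * (qq ^ (15 : ℤ) + qq ^ (-15 : ℤ)) := by
  unfold qNum
  rw [show (30 : ℕ) = 15 + 15 from rfl, Finset.sum_range_add, mul_add, Finset.sum_mul,
    Finset.sum_mul]
  congr 1 <;> refine Finset.sum_congr rfl fun i _ => ?_ <;>
    rw [← zpow_add₀ qq_ne_zero] <;> congr 1 <;> push_cast <;> ring

theorem IsNatLaurent.monomial (n : ℕ) (k : ℤ) : IsNatLaurent ((n : RatFunc ℚ) * qq ^ k) :=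
  ⟨Finsupp.single k n, by rw [Finsupp.sum_single_index (by simp)]⟩

theorem IsNatLaurent.sum {ι : Type*} (s : Finset ι) (f : ι → RatFunc ℚ)
    (h : ∀ i ∈ s, IsNatLaurent (f i)) : IsNatLaurent (∑ i ∈ s, f i) := by
  refine Finset.sum_induction f IsNatLaurent ?_ ⟨0, by simp⟩ h
  rintro _ _ ⟨c, rfl⟩ ⟨d, rfl⟩
  exact ⟨c + d, (Finsupp.sum_add_index' (by simp) (by intros; push_cast; ring)).symm⟩

/-- The symmetrized `q`-Cartan matrix of type `E_8` (Bourbaki labelling, edges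
`{1,3}, {3,4}, {4,5}, {5,6}, {6,7}, {7,8}, {2,4}`) is invertible, and every entry of
`[30]_q · B(q)⁻¹` lies in `ℕ[q,q⁻¹]`. -/
theorem typeE8_qCartan_inverse
    (B : Matrix (Fin 8) (Fin 8) (RatFunc ℚ))
    (hB : B = !![qNum 2, 0, -1, 0, 0, 0, 0, 0;
                 0, qNum 2, 0, -1, 0, 0, 0, 0;
                 -1, 0, qNum 2, -1, 0, 0, 0, 0;
                 0, -1, -1, qNum 2, -1, 0, 0, 0;
                 0, 0, 0, -1, qNum 2, -1, 0, 0;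
                 0, 0, 0, 0, -1, qNum 2, -1, 0;
                 0, 0, 0, 0, 0, -1, qNum 2, -1;
                 0, 0, 0, 0, 0, 0, -1, qNum 2]) :
    IsUnit B ∧ ∀ i j : Fin 8, IsNatLaurent (qNum 30 * B⁻¹ i j) := by
  have hBA : B = (qq + qq⁻¹) • (1 : Matrix (Fin 8) (Fin 8) (RatFunc ℚ)) -
      adjE8.map (Int.cast : ℤ → RatFunc ℚ) := by
    have h2 : qNum 2 = qq + qq⁻¹ := by
      norm_num [qNum, Finset.sum_range_succ]
    rw [hB, h2]
    ext i j
    fin_cases i <;> fin_cases j <;> simp [adjE8]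
  set D : RatFunc ℚ := qq ^ (15 : ℤ) + qq ^ (-15 : ℤ) with hD
  have hD0 : D ≠ 0 := qq_pow_add_ne_zero
  set S : Matrix (Fin 8) (Fin 8) (RatFunc ℚ) :=
    ∑ k ∈ Finset.range 29, qq ^ k • (chebE8 (k + 1)).map (Int.cast : ℤ → RatFunc ℚ) with hS
  have hBS : B * S = (qq⁻¹ + qq ^ 29) • 1 := by
    rw [hBA, hS, qCartan_mul_sum qq qq_ne_zero, chebE8_twentynine, chebE8_thirty, add_smul]
    simp
  have hDq : qq ^ (-14 : ℤ) * (qq⁻¹ + qq ^ 29) = D := by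
    rw [← zpow_neg_one, ← zpow_natCast, mul_add, ← zpow_add₀ qq_ne_zero, ← zpow_add₀ qq_ne_zero,
      hD, add_comm]
    norm_num
  have hinv : B * ((D⁻¹ * qq ^ (-14 : ℤ)) • S) = 1 := by
    rw [Matrix.mul_smul, hBS, smul_smul, mul_assoc, hDq, inv_mul_cancel₀ hD0, one_smul]
  refine ⟨IsUnit.of_mul_eq_one _ hinv, fun i j => ?_⟩
  have key : qNum 30 * B⁻¹ i j = ∑ a ∈ Finset.range 15, ∑ k ∈ Finset.range 29,
      (((chebE8 (k + 1) i j).toNat : ℕ) : RatFunc ℚ) *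
        qq ^ (((15 : ℕ) : ℤ) - 1 - 2 * (a : ℤ) + (-14 + (k : ℤ))) := by
    rw [Matrix.inv_eq_right_inv hinv, qNum_thirty, ← hD, Matrix.smul_apply, smul_eq_mul,
      ← mul_assoc, mul_assoc (qNum 15), mul_inv_cancel_left₀ hD0, qNum, mul_assoc, Finset.sum_mul,
      hS, Matrix.sum_apply, Finset.mul_sum]
    refine Finset.sum_congr rfl fun a _ => ?_
    rw [Finset.mul_sum]
    refine Finset.sum_congr rfl fun k hk => ?_
    have hpos := chebE8_nonneg ⟨k + 1, by have := Finset.mem_range.mp hk; omega⟩ i j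
    have hcast : (((chebE8 (k + 1) i j).toNat : ℕ) : RatFunc ℚ) =
        ((chebE8 (k + 1) i j : ℤ) : RatFunc ℚ) := by
      exact_mod_cast congrArg (Int.cast : ℤ → RatFunc ℚ) (Int.toNat_of_nonneg hpos)
    rw [hcast, zpow_add₀ qq_ne_zero, zpow_add₀ qq_ne_zero (-14), zpow_natCast, Matrix.smul_apply,
      Matrix.map_apply, smul_eq_mul]
    ring
  rw [key]
  exact IsNatLaurent.sum _ _ fun a _ => IsNatLaurent.sum _ _ fun k _ => IsNatLaurent.monomial _ _
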